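/- arXiv:2206.01558 — 2 statements merged into one kernel-verified Lean document; each statement's English description precedes it below -/
import Mathlib

section
/- Let f : ℝ^D → ℝ^H be piecewise affine with respect to a finite cover of ℝ^D by convex sets Q_1, …, Q_R, with affine pieces f(x) = V_l x + a_l on Q_l, and let x ∈ ℝ^D satisfy V_l x ≠ 0 for every l. Then for every fixed φ ∈ ℝ^H and every ℓ > 0, the RBF kernel evaluation exp(−‖f(δ·x) − φ‖² / (2ℓ²)) tends to 0 as δ → ∞. -/
open Filter

/-!
Each affine piece `δ ↦ δ • V l x + a l` leaves every bounded set as `δ → ∞`, because `V l x ≠ 0`.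
There are only finitely many pieces, so beyond some `δ` all of them are outside the bounded set at
once, and hence so is `f (δ • x)`, whichever piece the ray is in at that moment.
-/

open Bornology Topology

theorem tendsto_of_eventually_exists_eq {α β ι : Type*} [Finite ι] {F : Filter α} {G : Filter β}
    {g : α → β} {p : ι → α → β} (hp : ∀ i, Tendsto (p i) F G)
    (hg : ∀ᶠ t in F, ∃ i, g t = p i t) : Tendsto g F G := by
  refine tendsto_def.mpr fun s hs => ?_
  have hmem : ∀ᶠ t in F, ∀ i, p i t ∈ s := eventually_all.mpr fun i => (hp i).eventually_mem hs
  filter_upwards [hg, hmem] with t ⟨i, hi⟩ ht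
  simpa only [Set.mem_preimage, hi] using ht i

section NormedSpace

variable {𝕜 W : Type*} [NormedField 𝕜] [NormedAddCommGroup W] [NormedSpace 𝕜 W]

theorem tendsto_smul_const_cobounded {v : W} (hv : v ≠ 0) :
    Tendsto (fun c : 𝕜 => c • v) (cobounded 𝕜) (cobounded W) := by
  rw [← tendsto_norm_atTop_iff_cobounded]
  simp only [norm_smul]
  exact tendsto_norm_cobounded_atTop.atTop_mul_const (norm_pos_iff.mpr hv)

theorem tendsto_smul_const_add_const_cobounded {v : W} (hv : v ≠ 0) (b : W) :
    Tendsto (fun c : 𝕜 => c • v + b) (cobounded 𝕜) (cobounded W) :=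
  (tendsto_add_const_cobounded b).comp (tendsto_smul_const_cobounded hv)

theorem tendsto_cobounded_along_line_of_piecewise_affine {E ι : Type*} [AddCommGroup E]
    [Module 𝕜 E] [Finite ι] {V : ι → E →ₗ[𝕜] W} {a : ι → W} {f : E → W}
    (hf : ∀ y, ∃ l, f y = V l y + a l) {x : E} (hx : ∀ l, V l x ≠ 0) :
    Tendsto (fun c : 𝕜 => f (c • x)) (cobounded 𝕜) (cobounded W) := by
  refine tendsto_of_eventually_exists_eq
    (fun l => tendsto_smul_const_add_const_cobounded (hx l) (a l)) (.of_forall fun c => ?_)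
  simpa only [map_smul] using hf (c • x)

end NormedSpace

/-- The RBF (Gaussian) kernel `κ(u, v)` with lengthscale `ℓ`, which measures the similarity of
latent representations. At `ℓ = 0` division by zero makes it the constant `1`. -/
noncomputable def rbfKernel {W : Type*} [SeminormedAddCommGroup W] (ℓ : ℝ) (u v : W) : ℝ :=
  Real.exp (-‖u - v‖ ^ 2 / (2 * ℓ ^ 2))

theorem tendsto_rbfKernel_cobounded {W : Type*} [SeminormedAddCommGroup W] {ℓ : ℝ} (hℓ : ℓ ≠ 0)
    (v : W) : Tendsto (fun u => rbfKernel ℓ u v) (cobounded W) (𝓝 0) := by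
  have hnorm : Tendsto (fun u : W => ‖u - v‖) (cobounded W) atTop :=
    tendsto_norm_cobounded_atTop.comp (tendsto_sub_const_cobounded v)
  have hsq : Tendsto (fun u : W => ‖u - v‖ ^ 2) (cobounded W) atTop :=
    (tendsto_pow_atTop two_ne_zero).comp hnorm
  exact Real.tendsto_exp_atBot.comp
    ((tendsto_neg_atTop_atBot.comp hsq).atBot_div_const (by positivity))

theorem rbf_kernel_tendsto_zero_along_ray_general {E W ι : Type*} [AddCommGroup E] [Module ℝ E]
    [NormedAddCommGroup W] [NormedSpace ℝ W] [Finite ι] {V : ι → E →ₗ[ℝ] W} {a : ι → W}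
    {f : E → W} (hf : ∀ y, ∃ l, f y = V l y + a l) {x : E} (hx : ∀ l, V l x ≠ 0)
    (φ : W) {ℓ : ℝ} (hℓ : ℓ ≠ 0) :
    Tendsto (fun δ : ℝ => rbfKernel ℓ (f (δ • x)) φ) atTop (𝓝 0) := by
  have hray : Tendsto (fun δ : ℝ => f (δ • x)) atTop (cobounded W) :=
    (tendsto_cobounded_along_line_of_piecewise_affine hf hx).mono_left
      IsOrderBornology.atTop_le_cobounded
  exact (tendsto_rbfKernel_cobounded hℓ φ).comp hray

/-- The RBF kernel similarity between `f (δ • x)` and any fixed inducing point `φ`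
vanishes as `δ → ∞`, for a piecewise affine encoder `f` and `x` with `V l x ≠ 0` for
every piece `l`. -/
theorem rbf_kernel_tendsto_zero_along_ray
    (D H R : ℕ)
    (Q : Fin R → Set (EuclideanSpace ℝ (Fin D)))
    (V : Fin R → (EuclideanSpace ℝ (Fin D) →ₗ[ℝ] EuclideanSpace ℝ (Fin H)))
    (a : Fin R → EuclideanSpace ℝ (Fin H))
    (f : EuclideanSpace ℝ (Fin D) → EuclideanSpace ℝ (Fin H))
    (hconv : ∀ l, Convex ℝ (Q l))
    (hcover : (⋃ l, Q l) = Set.univ)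
    (hf : ∀ l, ∀ x ∈ Q l, f x = V l x + a l)
    (x : EuclideanSpace ℝ (Fin D))
    (hx : ∀ l, V l x ≠ 0)
    (φ : EuclideanSpace ℝ (Fin H)) (ℓ : ℝ) (hℓ : 0 < ℓ) :
    Tendsto (fun δ : ℝ => Real.exp (-‖f (δ • x) - φ‖ ^ 2 / (2 * ℓ ^ 2)))
      atTop (nhds 0) := by
  have hpieces : ∀ y, ∃ l, f y = V l y + a l := fun y =>
    (Set.iUnion_eq_univ_iff.mp hcover y).imp fun l hl => hf l y hl
  exact rbf_kernel_tendsto_zero_along_ray_general hpieces hx φ hℓ.ne'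
end

section
/- Let f : ℝ^D → ℝ^H be piecewise affine with respect to a finite cover of ℝ^D by convex sets Q_1, …, Q_R, with affine pieces f(x) = V_l x + a_l on Q_l, and let x ∈ ℝ^D satisfy V_l x ≠ 0 for every l. Let α > 0, ℓ > 0, let κ(u, v) = (1 + ‖u − v‖²/(2αℓ²))^{−α} be the rational quadratic kernel, fix inducing points φ_1, …, φ_K ∈ ℝ^H and a matrix C ∈ ℝ^{K×K}, and define σ(z) = κ(z, z) − Σ_{k,k'=1}^K κ(z, φ_k) C_{k k'} κ(z, φ_{k'}). Then σ(f(δ·x)) → κ(0, 0) = 1 as δ → ∞. -/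
open Filter

/-! Only finitely many affine maps describe `f`, and each of them, restricted to the ray `δ • x`, is
`δ ↦ δ • V l x + a l`, which goes to infinity because `V l x ≠ 0`. Whichever piece is in force at
`δ • x`, finiteness makes the escape to infinity uniform over the pieces. Since the kernel decays at
infinity, the encoded ray decorrelates from every inducing point, and only the prior term of the
predictive variance survives. -/

open Bornology Topology

/-- The rational quadratic kernel with scale mixture parameter `α` and lengthscale `ℓ`. It depends
on its arguments only through their distance, so it is defined on any metric space. -/
noncomputable def rationalQuadraticKernel {X : Type*} [PseudoMetricSpace X] (α ℓ : ℝ) (u v : X) :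
    ℝ :=
  (1 + dist u v ^ 2 / (2 * α * ℓ ^ 2)) ^ (-α)

/-- The predictive variance at `z` of a Gaussian process with prior covariance `κ` and inducing
points `φ`. The matrix `C` is arbitrary, which covers both exact and variational posteriors. -/
def predictiveVariance {X K : Type*} [Fintype K] (κ : X → X → ℝ) (φ : K → X) (C : Matrix K K ℝ)
    (z : X) : ℝ :=
  κ z z - ∑ k, ∑ k', κ z (φ k) * C k k' * κ z (φ k')

section Kernel

variable {X : Type*}

theorem tendsto_predictiveVariance {K : Type*} [Fintype K] {κ : X → X → ℝ} {φ : K → X}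
    {L : Filter X} {c : ℝ} (C : Matrix K K ℝ) (hdiag : Tendsto (fun z => κ z z) L (𝓝 c))
    (hφ : ∀ k, Tendsto (κ · (φ k)) L (𝓝 0)) :
    Tendsto (predictiveVariance κ φ C) L (𝓝 c) := by
  have hsum : Tendsto (fun z => ∑ k, ∑ k', κ z (φ k) * C k k' * κ z (φ k')) L
      (𝓝 (∑ k, ∑ k', 0 * C k k' * 0)) :=
    tendsto_finsetSum _ fun k _ => tendsto_finsetSum _ fun k' _ =>
      ((hφ k).mul_const (C k k')).mul (hφ k')
  simp only [mul_zero, Finset.sum_const_zero] at hsum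
  exact sub_zero c ▸ hdiag.sub hsum

variable [PseudoMetricSpace X]

@[simp]
theorem rationalQuadraticKernel_self (α ℓ : ℝ) (z : X) : rationalQuadraticKernel α ℓ z z = 1 := by
  simp [rationalQuadraticKernel]

theorem tendsto_rationalQuadraticKernel_cobounded {α ℓ : ℝ} (hα : 0 < α) (hℓ : ℓ ≠ 0) (v : X) :
    Tendsto (rationalQuadraticKernel α ℓ · v) (cobounded X) (𝓝 0) := by
  have hscale : 0 < 2 * α * ℓ ^ 2 := by positivity
  have hsq : Tendsto (fun u : X => dist u v ^ 2) (cobounded X) atTop :=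
    (tendsto_pow_atTop two_ne_zero).comp (Metric.tendsto_dist_right_cobounded_atTop v)
  exact (tendsto_rpow_neg_atTop hα).comp
    (tendsto_atTop_add_const_left _ 1 (hsq.atTop_div_const hscale))

theorem tendsto_predictiveVariance_rationalQuadraticKernel_cobounded {K : Type*} [Fintype K]
    {α ℓ : ℝ} (hα : 0 < α) (hℓ : ℓ ≠ 0) (φ : K → X) (C : Matrix K K ℝ) :
    Tendsto (predictiveVariance (rationalQuadraticKernel α ℓ) φ C) (cobounded X) (𝓝 1) :=
  tendsto_predictiveVariance C (by simp only [rationalQuadraticKernel_self, tendsto_const_nhds])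
    fun k => tendsto_rationalQuadraticKernel_cobounded hα hℓ (φ k)

end Kernel

theorem tendsto_of_eventually_exists_eq_s7 {ι X Y : Type*} [Finite ι] {l : Filter X} {l' : Filter Y}
    {f : X → Y} {g : ι → X → Y} (hg : ∀ i, Tendsto (g i) l l')
    (hfg : ∀ᶠ x in l, ∃ i, f x = g i x) : Tendsto f l l' := by
  rw [tendsto_iff_forall_eventually_mem]
  intro s hs
  have hgs : ∀ᶠ x in l, ∀ i, g i x ∈ s := eventually_all.mpr fun i => hg i hs
  filter_upwards [hgs, hfg] with x hx ⟨i, hi⟩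
  exact hi ▸ hx i

section Ray

variable {𝕜 E F : Type*} [NormedField 𝕜] [NormedAddCommGroup F] [NormedSpace 𝕜 F]

theorem tendsto_smul_add_const_cobounded {v : F} (hv : v ≠ 0) (a : F) :
    Tendsto (fun c : 𝕜 => c • v + a) (cobounded 𝕜) (cobounded F) := by
  have hsmul : Tendsto (fun c : 𝕜 => c • v) (cobounded 𝕜) (cobounded F) := by
    simp only [← tendsto_norm_atTop_iff_cobounded, norm_smul]
    exact tendsto_norm_cobounded_atTop.atTop_mul_const (norm_pos_iff.mpr hv)
  exact (tendsto_add_const_cobounded a).comp hsmul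

theorem tendsto_piecewise_affine_smul_cobounded [AddCommGroup E] [Module 𝕜 E] {ι : Type*} [Finite ι]
    {Q : ι → Set E} {V : ι → E →ₗ[𝕜] F} {a : ι → F} {f : E → F} (hcover : ⋃ l, Q l = Set.univ)
    (hf : ∀ l, ∀ y ∈ Q l, f y = V l y + a l) {x : E} (hx : ∀ l, V l x ≠ 0) :
    Tendsto (fun c : 𝕜 => f (c • x)) (cobounded 𝕜) (cobounded F) := by
  refine tendsto_of_eventually_exists_eq_s7
    (fun l => tendsto_smul_add_const_cobounded (hx l) (a l)) (Eventually.of_forall fun c => ?_)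
  obtain ⟨l, hl⟩ := Set.iUnion_eq_univ_iff.mp hcover (c • x)
  exact ⟨l, by rw [hf l _ hl, map_smul]⟩

end Ray

theorem dkl_rq_variance_tendsto_prior_general {ι K E F : Type*} [Finite ι] [Fintype K]
    [AddCommGroup E] [Module ℝ E] [NormedAddCommGroup F] [NormedSpace ℝ F]
    {Q : ι → Set E} {V : ι → E →ₗ[ℝ] F} {a : ι → F} {f : E → F} (hcover : ⋃ l, Q l = Set.univ)
    (hf : ∀ l, ∀ y ∈ Q l, f y = V l y + a l) {x : E} (hx : ∀ l, V l x ≠ 0)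
    {α ℓ : ℝ} (hα : 0 < α) (hℓ : ℓ ≠ 0) (φ : K → F) (C : Matrix K K ℝ) :
    Tendsto (fun δ : ℝ => predictiveVariance (rationalQuadraticKernel α ℓ) φ C (f (δ • x)))
      atTop (𝓝 1) :=
  (tendsto_predictiveVariance_rationalQuadraticKernel_cobounded hα hℓ φ C).comp <|
    (tendsto_piecewise_affine_smul_cobounded hcover hf hx).mono_left
      IsOrderBornology.atTop_le_cobounded

/-- Theorem A.1 for the rational quadratic kernel: the deep kernel learning predictive
variance reverts to the prior variance `κ 0 0 = 1` along rays `δ • x` as `δ → ∞`. -/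
theorem dkl_rq_variance_tendsto_prior
    (D H R K : ℕ)
    (Q : Fin R → Set (EuclideanSpace ℝ (Fin D)))
    (V : Fin R → (EuclideanSpace ℝ (Fin D) →ₗ[ℝ] EuclideanSpace ℝ (Fin H)))
    (a : Fin R → EuclideanSpace ℝ (Fin H))
    (f : EuclideanSpace ℝ (Fin D) → EuclideanSpace ℝ (Fin H))
    (hconv : ∀ l, Convex ℝ (Q l))
    (hcover : (⋃ l, Q l) = Set.univ)
    (hf : ∀ l, ∀ x ∈ Q l, f x = V l x + a l)
    (x : EuclideanSpace ℝ (Fin D))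
    (hx : ∀ l, V l x ≠ 0)
    (α ℓ : ℝ) (hα : 0 < α) (hℓ : 0 < ℓ)
    (κ : EuclideanSpace ℝ (Fin H) → EuclideanSpace ℝ (Fin H) → ℝ)
    (hκ : ∀ u v, κ u v = (1 + ‖u - v‖ ^ 2 / (2 * α * ℓ ^ 2)) ^ (-α))
    (φ : Fin K → EuclideanSpace ℝ (Fin H))
    (C : Matrix (Fin K) (Fin K) ℝ)
    (σ : EuclideanSpace ℝ (Fin H) → ℝ)
    (hσ : ∀ z, σ z = κ z z - ∑ k : Fin K, ∑ k' : Fin K, κ z (φ k) * C k k' * κ z (φ k')) :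
    Tendsto (fun δ : ℝ => σ (f (δ • x))) atTop (nhds (κ 0 0)) ∧ κ 0 0 = 1 := by
  obtain rfl : κ = rationalQuadraticKernel α ℓ := by
    ext u v
    rw [hκ, rationalQuadraticKernel, dist_eq_norm]
  obtain rfl : σ = predictiveVariance (rationalQuadraticKernel α ℓ) φ C := funext hσ
  rw [rationalQuadraticKernel_self]
  exact ⟨dkl_rq_variance_tendsto_prior_general hcover hf hx hα hℓ.ne' φ C, rfl⟩
end
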